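/- arXiv:2411.13068 — 2 statements merged into one kernel-verified Lean document; each statement's English description precedes it below -/
import Mathlib

section
/- In the critical case (r_n → 1 - 1/m), as n → ∞: r_n = 1 - 1/m + 2/(m n) - 4(m+1) log n/(3 m (m-1) n^2) + o(log n / n^2); that is, (r_n - (1 - 1/m) - 2/(m n) + 4(m+1) log n/(3 m (m-1) n^2)) · n^2/log n → 0. -/
open Filter Finset Topology

/-- A sequence that tends to `0` and eventually increases is eventually nonpositive. -/
lemma eventually_nonpos_of_eventually_le_succ {w : ℕ → ℝ} (h0 : Tendsto w atTop (𝓝 0))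
    (h : ∀ᶠ n in atTop, w n ≤ w (n + 1)) : ∀ᶠ n in atTop, w n ≤ 0 := by
  obtain ⟨N, hN⟩ := eventually_atTop.1 h
  have hmono : Monotone fun k => w (k + N) := monotone_nat_of_le_succ fun k => by
    simpa [add_right_comm] using hN (k + N) (Nat.le_add_left _ _)
  filter_upwards [eventually_ge_atTop N] with n hn
  simpa [Nat.sub_add_cancel hn] using
    hmono.ge_of_tendsto ((tendsto_add_atTop_iff_nat N).2 h0) (n - N)

/-- A Stolz–Cesàro type lemma for null sequences, comparing increments of `u` with those of
powers of `e`. -/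
lemma tendsto_div_pow_of_tendsto_increments {e u : ℕ → ℝ} (hpos : ∀ n, 0 < e n)
    (hanti : ∀ n, e (n + 1) < e n) (he : Tendsto e atTop (𝓝 0)) (hu : Tendsto u atTop (𝓝 0))
    (k : ℕ)
    (h : Tendsto (fun n => (u n - u (n + 1)) / ((e n - e (n + 1)) * e n ^ k)) atTop (𝓝 0)) :
    Tendsto (fun n => u n / e n ^ (k + 1)) atTop (𝓝 0) := by
  rw [Metric.tendsto_nhds] at h ⊢
  intro ε hε
  have hv : Tendsto (fun n => ε / 2 * e n ^ (k + 1)) atTop (𝓝 0) := by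
    simpa using (he.pow (k + 1)).const_mul (ε / 2)
  have hle : ∀ᶠ n in atTop,
      |u n - u (n + 1)| ≤ ε / 2 * e n ^ (k + 1) - ε / 2 * e (n + 1) ^ (k + 1) := by
    filter_upwards [h (ε / 2) (by positivity)] with n hn
    have hd : 0 < e n - e (n + 1) := sub_pos.2 (hanti n)
    have hk : 0 < e n ^ k := pow_pos (hpos n) k
    rw [Real.dist_eq, sub_zero, abs_div, abs_of_pos (mul_pos hd hk),
      div_lt_iff₀ (mul_pos hd hk)] at hn
    have hpow : e (n + 1) ^ k ≤ e n ^ k := pow_le_pow_left₀ (hpos _).le (hanti n).le k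
    have hmul : e (n + 1) ^ k * e (n + 1) ≤ e n ^ k * e (n + 1) :=
      mul_le_mul_of_nonneg_right hpow (hpos _).le
    rw [pow_succ, pow_succ]
    nlinarith
  have h1 := eventually_nonpos_of_eventually_le_succ (w := fun n => u n - ε / 2 * e n ^ (k + 1))
    (by simpa using hu.sub hv) (by
      filter_upwards [hle] with n hn
      linarith [(abs_le.1 hn).2])
  have h2 := eventually_nonpos_of_eventually_le_succ (w := fun n => -u n - ε / 2 * e n ^ (k + 1))
    (by simpa using hu.neg.sub hv) (by
      filter_upwards [hle] with n hn
      linarith [(abs_le.1 hn).1])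
  filter_upwards [h1, h2] with n h1 h2
  have hk : 0 < e n ^ (k + 1) := pow_pos (hpos n) _
  rw [Real.dist_eq, sub_zero, abs_div, abs_of_pos hk, div_lt_iff₀ hk]
  have : 0 < ε * e n ^ (k + 1) := by positivity
  rw [abs_lt]
  constructor <;> linarith

lemma tendsto_nat_mul_log_succ_sub_log :
    Tendsto (fun n : ℕ => (n : ℝ) * (Real.log (n + 1) - Real.log n)) atTop (𝓝 1) := by
  have h := (Real.tendsto_mul_log_one_add_div_atTop 1).comp tendsto_natCast_atTop_atTop
  refine h.congr' ?_
  filter_upwards [eventually_gt_atTop 0] with n hn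
  have hn' : (0 : ℝ) < n := by exact_mod_cast hn
  simp only [Function.comp_apply]
  rw [← Real.log_div (by positivity) hn'.ne', add_div, div_self hn'.ne']

/-- If `n (g (n + 1) - g n) → l` then `g n ∼ l log n`. -/
lemma tendsto_div_log_of_tendsto_mul_sub {g : ℕ → ℝ} {l : ℝ}
    (h : Tendsto (fun n : ℕ => (n : ℝ) * (g (n + 1) - g n)) atTop (𝓝 l)) :
    Tendsto (fun n : ℕ => g n / Real.log n) atTop (𝓝 l) := by
  have hlog : Tendsto (fun n : ℕ => Real.log n) atTop atTop :=
    Real.tendsto_log_atTop.comp tendsto_natCast_atTop_atTop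
  have hsum : ∀ n : ℕ, ∑ i ∈ range n, (Real.log ((i + 1 : ℕ) : ℝ) - Real.log (i : ℝ)) =
      Real.log n := fun n => by
    rw [Finset.sum_range_sub fun i : ℕ => Real.log (i : ℝ)]
    simp
  have ho : (fun i : ℕ => (g (i + 1) - g i) - l * (Real.log ((i + 1 : ℕ) : ℝ) - Real.log i))
      =o[atTop] fun i : ℕ => Real.log ((i + 1 : ℕ) : ℝ) - Real.log (i : ℝ) := by
    refine (Asymptotics.isLittleO_iff_tendsto' ?_).2 ?_
    · filter_upwards [eventually_gt_atTop 0] with n hn h0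
      have : Real.log n < Real.log ((n + 1 : ℕ) : ℝ) :=
        Real.log_lt_log (by exact_mod_cast hn) (by push_cast; linarith)
      linarith
    · have hq := (h.div tendsto_nat_mul_log_succ_sub_log one_ne_zero).sub_const l
      rw [div_one, sub_self] at hq
      refine hq.congr' ?_
      filter_upwards [eventually_gt_atTop 0] with n hn
      have hn' : (0 : ℝ) < n := by exact_mod_cast hn
      have : Real.log n < Real.log ((n : ℝ) + 1) := Real.log_lt_log hn' (by linarith)
      have hd : Real.log ((n : ℝ) + 1) - Real.log n ≠ 0 := (sub_pos.2 this).ne'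
      push_cast
      simp only [Pi.div_apply]
      field_simp
  have hS := ho.sum_range (fun n => by
      rcases Nat.eq_zero_or_pos n with rfl | hn
      · simp
      · exact sub_nonneg.2 (Real.log_le_log (by exact_mod_cast hn) (by push_cast; linarith)))
    (by simpa only [hsum] using hlog)
  simp only [hsum, Finset.sum_sub_distrib, ← Finset.mul_sum] at hS
  have ht := hS.tendsto_div_nhds_zero
  have hc := (ht.add_const l).add (hlog.const_div_atTop (g 0))
  rw [zero_add, add_zero] at hc
  refine hc.congr' ?_
  filter_upwards [hlog.eventually_gt_atTop 0] with n hn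
  have hg := Finset.sum_range_sub g n
  rw [Finset.sum_sub_distrib] at hg
  rw [hg]
  field_simp
  ring

/-- Asymptotics of the planar recursion satisfied by `e = m r - (m - 1)` and
`x = (m - 1) (1 - p)`. -/
lemma tendsto_inv_increment_of_recursion {m : ℝ} (hm : 1 < m) {e x : ℕ → ℝ}
    (hpos : ∀ n, 0 < e n) (hx : ∀ n, 0 < x n)
    (he' : ∀ n, e (n + 1) = (e n - (m - 1) * x n) / (1 + x n))
    (hx' : ∀ n, x (n + 1) = x n * (1 - e n + m * x n) / (1 + x n) ^ 2)
    (he : Tendsto e atTop (𝓝 0)) (hx0 : Tendsto x atTop (𝓝 0)) :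
    Tendsto (fun n => ((e (n + 1))⁻¹ - (e n)⁻¹ - 1 / 2) / e n) atTop
      (𝓝 ((m + 1) / (6 * (m - 1)))) := by
  have hm1 : 0 < m - 1 := sub_pos.2 hm
  have hm1' := hm1.ne'
  have hd : ∀ n, e n - e (n + 1) = x n * (e n + (m - 1)) / (1 + x n) := fun n => by
    have : 0 < 1 + x n := by linarith [hx n]
    rw [he']; field_simp; ring
  have hdpos : ∀ n, 0 < e n - e (n + 1) := fun n => by
    rw [hd]
    have := hx n
    have := hpos n
    positivity
  have hanti : ∀ n, e (n + 1) < e n := fun n => sub_pos.1 (hdpos n)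
  have hdx : ∀ n, x n - x (n + 1) =
      (e n - e (n + 1)) * ((e n - (m - 2) * x n + x n ^ 2) / ((1 + x n) * (e n + (m - 1)))) :=
    fun n => by
      have h1 : 0 < 1 + x n := by linarith [hx n]
      have h2 : 0 < e n + (m - 1) := by linarith [hpos n]
      rw [hd, hx']; field_simp; ring
  have h1 : Tendsto (fun n => x n / e n) atTop (𝓝 0) := by
    have := tendsto_div_pow_of_tendsto_increments hpos hanti he hx0 0 ?_
    · simpa using this
    have hF : ContinuousAt (fun q : ℝ × ℝ =>
        (q.1 - (m - 2) * q.2 + q.2 ^ 2) / ((1 + q.2) * (q.1 + (m - 1)))) (0, 0) := by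
      fun_prop (disch := simpa using hm1')
    have hT := hF.tendsto.comp (he.prodMk_nhds hx0)
    simp only [mul_zero, sub_zero, ne_eq, OfNat.ofNat_ne_zero, not_false_eq_true, zero_pow,
      add_zero, zero_div] at hT
    refine hT.congr fun n => ?_
    have := (hdpos n).ne'
    rw [hdx]
    simp only [Function.comp_apply, pow_zero, mul_one]
    rw [mul_div_cancel_left₀ _ this]
  have h2 : Tendsto (fun n => x n / e n ^ 2) atTop (𝓝 (1 / (2 * (m - 1)))) := by
    have := tendsto_div_pow_of_tendsto_increments
      (u := fun n => x n - 1 / (2 * (m - 1)) * e n ^ 2) hpos hanti he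
      (by simpa using hx0.sub ((he.pow 2).const_mul _)) 1 ?_
    · have h := this.add_const (1 / (2 * (m - 1)))
      rw [zero_add] at h
      refine h.congr fun n => ?_
      have := (hpos n).ne'
      norm_num only
      field_simp
      ring
    have hF : ContinuousAt (fun q : ℝ × ℝ × ℝ =>
        (1 - (m - 2) * q.2.2 + q.2.1 * q.2.2) / ((1 + q.2.1) * (q.1 + (m - 1)))
          - 1 / (2 * (m - 1)) * (1 + (1 - (m - 1) * q.2.2) / (1 + q.2.1))) (0, 0, 0) := by
      fun_prop (disch := simp [hm1'])
    have hT := hF.tendsto.comp (he.prodMk_nhds (hx0.prodMk_nhds h1))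
    have hv : (1 - (m - 2) * 0 + 0 * 0) / ((1 + 0) * (0 + (m - 1)))
          - 1 / (2 * (m - 1)) * (1 + (1 - (m - 1) * 0) / (1 + 0)) = 0 := by
      field_simp; ring
    simp only [hv] at hT
    refine hT.congr fun n => ?_
    have h0 := (hdpos n).ne'
    have h1 : 1 + x n ≠ 0 := by linarith [hx n]
    have h2 : e n + (m - 1) ≠ 0 := by linarith [hpos n]
    have h3 := (hpos n).ne'
    have hsplit : x n - 1 / (2 * (m - 1)) * e n ^ 2
        - (x (n + 1) - 1 / (2 * (m - 1)) * e (n + 1) ^ 2) =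
        (e n - e (n + 1)) * ((e n - (m - 2) * x n + x n ^ 2) / ((1 + x n) * (e n + (m - 1)))
          - 1 / (2 * (m - 1)) * (e n + e (n + 1))) := by
      linear_combination hdx n
    rw [hsplit, mul_div_mul_left _ _ h0, he']
    simp only [Function.comp_apply]
    field_simp
  have h3 : Tendsto (fun n => (x n / e n ^ 2 - 1 / (2 * (m - 1))) / e n) atTop
      (𝓝 (-(m + 1) / (12 * (m - 1) ^ 2))) := by
    have := tendsto_div_pow_of_tendsto_increments
      (u := fun n => x n - 1 / (2 * (m - 1)) * e n ^ 2
        - (-(m + 1) / (12 * (m - 1) ^ 2)) * e n ^ 3) hpos hanti he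
      (by simpa using (hx0.sub ((he.pow 2).const_mul _)).sub ((he.pow 3).const_mul _)) 2 ?_
    · have h := this.add_const (-(m + 1) / (12 * (m - 1) ^ 2))
      rw [zero_add] at h
      refine h.congr fun n => ?_
      have := (hpos n).ne'
      norm_num only
      field_simp
      ring
    have hF : ContinuousAt (fun q : ℝ × ℝ × ℝ =>
        -(1 + q.2.2 * q.1 * (q.1 + (m - 1))) / ((1 + q.2.1) * (q.1 + (m - 1)) * (m - 1))
          + (-(m - 2) * q.2.2 + q.2.2 ^ 2 * q.1 ^ 2) / ((1 + q.2.1) * (q.1 + (m - 1)))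
          + 1 / (2 * (m - 1)) * (q.2.2 * (q.1 + (m - 1)) / (1 + q.2.1))
          - (-(m + 1) / (12 * (m - 1) ^ 2)) * (1 + (1 - (m - 1) * q.2.2 * q.1) / (1 + q.2.1)
            + ((1 - (m - 1) * q.2.2 * q.1) / (1 + q.2.1)) ^ 2))
        (0, 0, 1 / (2 * (m - 1))) := by
      fun_prop (disch := simp [hm1'])
    have hT := hF.tendsto.comp (he.prodMk_nhds (hx0.prodMk_nhds h2))
    have hv : -(1 + 1 / (2 * (m - 1)) * 0 * (0 + (m - 1))) / ((1 + 0) * (0 + (m - 1)) * (m - 1))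
          + (-(m - 2) * (1 / (2 * (m - 1))) + (1 / (2 * (m - 1))) ^ 2 * 0 ^ 2)
            / ((1 + 0) * (0 + (m - 1)))
          + 1 / (2 * (m - 1)) * (1 / (2 * (m - 1)) * (0 + (m - 1)) / (1 + 0))
          - (-(m + 1) / (12 * (m - 1) ^ 2)) * (1 + (1 - (m - 1) * (1 / (2 * (m - 1))) * 0) / (1 + 0)
            + ((1 - (m - 1) * (1 / (2 * (m - 1))) * 0) / (1 + 0)) ^ 2) = 0 := by
      field_simp; ring
    simp only [hv] at hT
    refine hT.congr fun n => ?_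
    have h0 := (hdpos n).ne'
    have h1 : 1 + x n ≠ 0 := by linarith [hx n]
    have h2 : e n + (m - 1) ≠ 0 := by linarith [hpos n]
    have h3 := (hpos n).ne'
    have hsplit : x n - 1 / (2 * (m - 1)) * e n ^ 2 - (-(m + 1) / (12 * (m - 1) ^ 2)) * e n ^ 3
        - (x (n + 1) - 1 / (2 * (m - 1)) * e (n + 1) ^ 2
          - (-(m + 1) / (12 * (m - 1) ^ 2)) * e (n + 1) ^ 3) =
        (e n - e (n + 1)) * ((e n - (m - 2) * x n + x n ^ 2) / ((1 + x n) * (e n + (m - 1)))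
          - 1 / (2 * (m - 1)) * (e n + e (n + 1))
          - (-(m + 1) / (12 * (m - 1) ^ 2)) *
            (e n ^ 2 + e n * e (n + 1) + e (n + 1) ^ 2)) := by
      linear_combination hdx n
    rw [hsplit, mul_div_mul_left _ _ h0, he']
    simp only [Function.comp_apply]
    field_simp
    ring
  have hF : ContinuousAt (fun q : ℝ × ℝ × ℝ =>
      (1 / (2 * (m - 1)) + q.2.2 * q.1 + q.2.2 * (m - 1) + (m - 1) * q.2.1 / 2)
        / (1 - (m - 1) * q.2.1 * q.1))
      (0, 1 / (2 * (m - 1)), -(m + 1) / (12 * (m - 1) ^ 2)) := by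
    fun_prop (disch := simp)
  have hT := hF.tendsto.comp (he.prodMk_nhds (h2.prodMk_nhds h3))
  have hv : (1 / (2 * (m - 1)) + -(m + 1) / (12 * (m - 1) ^ 2) * 0
        + -(m + 1) / (12 * (m - 1) ^ 2) * (m - 1) + (m - 1) * (1 / (2 * (m - 1))) / 2)
        / (1 - (m - 1) * (1 / (2 * (m - 1))) * 0) = (m + 1) / (6 * (m - 1)) := by
    field_simp; ring
  simp only [hv] at hT
  refine hT.congr fun n => ?_
  have h1 : 0 < 1 + x n := by linarith [hx n]
  have h3 := (hpos n).ne'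
  have h4 : e n - (m - 1) * x n ≠ 0 := by
    have := hpos (n + 1)
    rw [he'] at this
    exact ((div_pos_iff_of_pos_right h1).1 this).ne'
  have h5 : 1 - (m - 1) * (x n / e n ^ 2) * e n = (e n - (m - 1) * x n) / e n := by
    field_simp
  rw [he']
  simp only [Function.comp_apply]
  rw [h5]
  field_simp
  ring

/-- Inversion of the asymptotic expansion: if `(1/e_{n+1} - 1/e_n - 1/2) / e_n → β`, then
`e_n = 2/n - 8 β log n / n² + o(log n / n²)`. -/
lemma tendsto_expansion_of_tendsto_inv_increment {e : ℕ → ℝ} {β : ℝ} (hpos : ∀ n, 0 < e n)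
    (he : Tendsto e atTop (𝓝 0))
    (h : Tendsto (fun n => ((e (n + 1))⁻¹ - (e n)⁻¹ - 1 / 2) / e n) atTop (𝓝 β)) :
    Tendsto (fun n : ℕ => (e n - 2 / n) * n ^ 2 / Real.log n) atTop (𝓝 (-(8 * β))) := by
  have h1 : Tendsto (fun n => (e (n + 1))⁻¹ - (e n)⁻¹) atTop (𝓝 (1 / 2)) := by
    have := (h.mul he).add_const (1 / 2)
    rw [mul_zero, zero_add] at this
    refine this.congr fun n => ?_
    rw [div_mul_cancel₀ _ (hpos n).ne', sub_add_cancel]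
  have h2 : Tendsto (fun n : ℕ => (n : ℝ) * e n) atTop (𝓝 2) := by
    have hc := h1.cesaro
    simp only [Finset.sum_range_sub fun i => (e i)⁻¹] at hc
    have hs := (hc.add (tendsto_inv_atTop_nhds_zero_nat.mul_const (e 0)⁻¹)).inv₀
      (by norm_num)
    rw [zero_mul, add_zero, one_div, inv_inv] at hs
    refine hs.congr fun n => ?_
    rw [← mul_add, sub_add_cancel, mul_inv, inv_inv, inv_inv]
  have h3 : Tendsto (fun n : ℕ => ((e n)⁻¹ - n / 2) / Real.log n) atTop (𝓝 (2 * β)) := by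
    apply tendsto_div_log_of_tendsto_mul_sub
    refine (h2.mul h).congr fun n => ?_
    have := (hpos n).ne'
    rw [mul_assoc, mul_div_cancel₀ _ this]
    push_cast
    ring
  have h4 := (h2.mul h3).const_mul (-2)
  rw [show -2 * (2 * (2 * β)) = -(8 * β) by ring] at h4
  refine h4.congr' ?_
  filter_upwards [eventually_gt_atTop 0] with n hn
  have hn' : (n : ℝ) ≠ 0 := by exact_mod_cast hn.ne'
  have := (hpos n).ne'
  field_simp
  ring

/-- In the critical case (`r_n → 1 - 1/m`), as `n → ∞`:
`r_n = 1 - 1/m + 2/(m n) - 4(m+1) log n/(3 m (m-1) n²) + o(log n / n²)`, i.e.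
`(r_n - (1 - 1/m) - 2/(m n) + 4(m+1) log n/(3 m (m-1) n²)) · n²/log n → 0`. -/
theorem stmt15 (m : ℝ) (hm : 1 < m) (r p : ℕ → ℝ)
    (hmem : ∀ n, r n ∈ Set.Ioo (0 : ℝ) 1 ∧ p n ∈ Set.Ioo (0 : ℝ) 1)
    (hrec_r : ∀ n, r (n + 1) = r n / (m - (m - 1) * p n))
    (hrec_p : ∀ n, p (n + 1) = 1 - (1 - r (n + 1)) * (1 - r (n + 1) * p n / r n))
    (hrlim : Tendsto r atTop (𝓝 (1 - 1 / m))) :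
    Tendsto
      (fun n : ℕ =>
        (r n - (1 - 1 / m) - 2 / (m * n) +
            4 * (m + 1) * Real.log n / (3 * m * (m - 1) * n ^ 2)) *
          n ^ 2 / Real.log n)
      atTop (𝓝 0) := by
  have hm0 : m ≠ 0 := by linarith
  have hm1 : 0 < m - 1 := sub_pos.2 hm
  have hm1' := hm1.ne'
  have hx : ∀ n, 0 < (m - 1) * (1 - p n) := fun n => mul_pos hm1 (sub_pos.2 (hmem n).2.2)
  have hD : ∀ n, m - (m - 1) * p n = 1 + (m - 1) * (1 - p n) := fun n => by ring
  simp only [hD] at hrec_r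
  have hDpos : ∀ n, 0 < 1 + (m - 1) * (1 - p n) := fun n => by linarith [hx n]
  have hranti : StrictAnti r := strictAnti_nat_of_succ_lt fun n => by
    rw [hrec_r]
    exact div_lt_self (hmem n).1.1 (by linarith [hx n])
  have hlim0 : 1 - 1 / m ≠ 0 := by
    rw [one_sub_div hm0]
    exact div_ne_zero hm1' hm0
  have hgt : ∀ n, 1 - 1 / m < r n := fun n =>
    (hranti.antitone.le_of_tendsto hrlim (n + 1)).trans_lt (hranti n.lt_succ_self)
  have hpos : ∀ n, 0 < m * r n - (m - 1) := fun n => by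
    have h := mul_lt_mul_of_pos_left (hgt n) (zero_lt_one.trans hm)
    rw [mul_sub, mul_one_div_cancel hm0] at h
    linarith
  have he : Tendsto (fun n => m * r n - (m - 1)) atTop (𝓝 0) := by
    have h := (hrlim.const_mul m).sub_const (m - 1)
    rwa [show m * (1 - 1 / m) - (m - 1) = 0 by field_simp; ring] at h
  have hx0 : Tendsto (fun n => (m - 1) * (1 - p n)) atTop (𝓝 0) := by
    have h := (hrlim.div (hrlim.comp (tendsto_add_atTop_nat 1)) hlim0).sub_const 1
    rw [div_self hlim0, sub_self] at h
    refine h.congr fun n => ?_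
    have h1 := (hmem n).1.1.ne'
    have h2 := (hDpos n).ne'
    simp only [Pi.div_apply, Function.comp_apply]
    rw [hrec_r, div_div_cancel₀ h1]
    ring
  have he' : ∀ n, m * r (n + 1) - (m - 1) =
      (m * r n - (m - 1) - (m - 1) * ((m - 1) * (1 - p n))) / (1 + (m - 1) * (1 - p n)) :=
    fun n => by
      have h2 := (hDpos n).ne'
      rw [hrec_r, eq_div_iff h2, sub_mul, mul_assoc, div_mul_cancel₀ _ h2]
      ring
  have hx' : ∀ n, (m - 1) * (1 - p (n + 1)) =
      (m - 1) * (1 - p n) * (1 - (m * r n - (m - 1)) + m * ((m - 1) * (1 - p n)))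
        / (1 + (m - 1) * (1 - p n)) ^ 2 := fun n => by
    have h1 := (hmem n).1.1.ne'
    have h2 := (hDpos n).ne'
    rw [hrec_p, hrec_r]
    field_simp
    ring
  have hmain := tendsto_expansion_of_tendsto_inv_increment hpos he
    (tendsto_inv_increment_of_recursion (e := fun n => m * r n - (m - 1))
      (x := fun n => (m - 1) * (1 - p n)) hm hpos hx he' hx' he hx0)
  have hfin := (hmain.div_const m).add_const (8 * ((m + 1) / (6 * (m - 1))) / m)
  rw [← add_div, neg_add_cancel, zero_div] at hfin
  refine hfin.congr' ?_
  filter_upwards [eventually_gt_atTop 1] with n hn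
  have hn' : (n : ℝ) ≠ 0 := by
    exact_mod_cast (zero_lt_one.trans hn).ne'
  have hlog : Real.log n ≠ 0 := (Real.log_pos (by exact_mod_cast hn)).ne'
  field_simp
  ring
end

section
/- In the critical case (r_n → 1 - 1/m), setting v_n := r_n - (1 - 1/m), one has lim_{n→∞} n^3 (v_n - v_{n+1} - (m/2) v_n v_{n+1}) = 4(m+1)/(3 m (m-1)). -/
open Filter Finset Topology

/-- The `0/0` form of the Stolz–Cesàro theorem. -/
theorem tendsto_div_of_tendsto_sub_div_sub {f g : ℕ → ℝ} {L : ℝ}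
    (hg : ∀ n, g (n + 1) < g n) (hf0 : Tendsto f atTop (𝓝 0)) (hg0 : Tendsto g atTop (𝓝 0))
    (h : Tendsto (fun n => (f n - f (n + 1)) / (g n - g (n + 1))) atTop (𝓝 L)) :
    Tendsto (fun n => f n / g n) atTop (𝓝 L) := by
  have hgpos : ∀ n, 0 < g n := fun n =>
    ((antitone_nat_of_succ_le fun n => (hg n).le).le_of_tendsto hg0 (n + 1)).trans_lt (hg n)
  rw [Metric.tendsto_atTop] at h ⊢
  intro ε hε
  obtain ⟨N, hN⟩ := h (ε / 2) (half_pos hε)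
  refine ⟨N, fun n hn => ?_⟩
  have key : ∀ k, |(f (k + n) - f (k + n + 1)) - L * (g (k + n) - g (k + n + 1))|
      ≤ ε / 2 * (g (k + n) - g (k + n + 1)) := fun k => by
    have h1 := hN (k + n) (by omega)
    have h2 := sub_pos.2 (hg (k + n))
    rw [Real.dist_eq] at h1
    calc _ = |(f (k + n) - f (k + n + 1)) / (g (k + n) - g (k + n + 1)) - L|
          * (g (k + n) - g (k + n + 1)) := by
            rw [← abs_of_pos h2, ← abs_mul, abs_of_pos h2, sub_mul, div_mul_cancel₀ _ h2.ne']
      _ ≤ _ := by gcongr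
  have hf0' := (tendsto_add_atTop_iff_nat n).2 hf0
  have hg0' := (tendsto_add_atTop_iff_nat n).2 hg0
  have hlow : 0 ≤ f n - (L - ε / 2) * g n := by
    have hanti : Antitone fun k => f (k + n) - (L - ε / 2) * g (k + n) :=
      antitone_nat_of_succ_le fun k => by
        have := (abs_le.1 (key k)).1
        rw [show k + 1 + n = k + n + 1 by omega]
        linarith
    simpa only [zero_add] using hanti.le_of_tendsto (by simpa using hf0'.sub (hg0'.const_mul (L - ε / 2))) 0
  have hup : f n - (L + ε / 2) * g n ≤ 0 := by
    have hmono : Monotone fun k => f (k + n) - (L + ε / 2) * g (k + n) :=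
      monotone_nat_of_le_succ fun k => by
        have := (abs_le.1 (key k)).2
        rw [show k + 1 + n = k + n + 1 by omega]
        linarith
    simpa only [zero_add] using hmono.ge_of_tendsto (by simpa using hf0'.sub (hg0'.const_mul (L + ε / 2))) 0
  have hn0 := hgpos n
  rw [Real.dist_eq, abs_lt]
  constructor
  · have : L - ε / 2 ≤ f n / g n := by rw [le_div_iff₀ hn0]; linarith
    linarith
  · have : f n / g n ≤ L + ε / 2 := by rw [div_le_iff₀ hn0]; linarith
    linarith

/-- If the increments of `u` converge to `L`, then so does `u n / n`. -/
theorem tendsto_div_natCast_of_tendsto_sub {u : ℕ → ℝ} {L : ℝ}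
    (h : Tendsto (fun n => u (n + 1) - u n) atTop (𝓝 L)) :
    Tendsto (fun n : ℕ => u n / n) atTop (𝓝 L) := by
  have h1 := h.cesaro.add (tendsto_const_div_atTop_nhds_zero_nat (u 0))
  simp only [Finset.sum_range_sub, add_zero] at h1
  refine h1.congr fun n => ?_
  ring

section CriticalRecursion

variable {m ρ : ℝ} {v q : ℕ → ℝ}

/-- The quotient of the increments of `q` and `v` in the critical recursion. -/
theorem critical_sub_div_sub (hm : 0 < m) (hρ : 0 < ρ)
    (hvpos : ∀ n, 0 < v n) (hqpos : ∀ n, 0 < q n)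
    (hv : ∀ n, v n = v (n + 1) + m * ρ * q n * (ρ + v (n + 1)))
    (hq : ∀ n, q (n + 1) = q n * (1 - m * v (n + 1)) / (1 + m * ρ * q n)) (n : ℕ) :
    (q n - q (n + 1)) / (v n - v (n + 1)) =
      (v (n + 1) + ρ * q n) / ((1 + m * ρ * q n) * (ρ * (ρ + v (n + 1)))) := by
  have h1 := hvpos (n + 1)
  have h2 := hqpos n
  have h3 : 0 < ρ + v (n + 1) := by positivity
  have h4 : 0 < 1 + m * ρ * q n := by positivity
  rw [hq n, hv n]
  field_simp
  ring

theorem critical_succ_lt (hm : 0 < m) (hρ : 0 < ρ)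
    (hvpos : ∀ n, 0 < v n) (hqpos : ∀ n, 0 < q n)
    (hv : ∀ n, v n = v (n + 1) + m * ρ * q n * (ρ + v (n + 1))) (n : ℕ) :
    v (n + 1) < v n := by
  have h1 := hvpos (n + 1)
  have h2 := hqpos n
  have : 0 < m * ρ * q n * (ρ + v (n + 1)) := by positivity
  linarith [hv n]

theorem critical_tendsto_div_succ (hm : 0 < m) (hρ : 0 < ρ)
    (hvpos : ∀ n, 0 < v n) (hqpos : ∀ n, 0 < q n)
    (hv : ∀ n, v n = v (n + 1) + m * ρ * q n * (ρ + v (n + 1)))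
    (hq : ∀ n, q (n + 1) = q n * (1 - m * v (n + 1)) / (1 + m * ρ * q n))
    (hv0 : Tendsto v atTop (𝓝 0)) (hq0 : Tendsto q atTop (𝓝 0)) :
    Tendsto (fun n => q n / v (n + 1)) atTop (𝓝 0) := by
  have hw0 := (tendsto_add_atTop_iff_nat 1).2 hv0
  have h1 : Tendsto (fun n => q n / v n) atTop (𝓝 0) := by
    refine tendsto_div_of_tendsto_sub_div_sub
      (critical_succ_lt hm hρ hvpos hqpos hv) hq0 hv0 ?_
    simp only [critical_sub_div_sub hm hρ hvpos hqpos hv hq]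
    have := (hw0.add (hq0.const_mul ρ)).div
      (((hq0.const_mul (m * ρ)).const_add 1).mul ((hw0.const_add ρ).const_mul ρ))
      (by simp [hρ.ne'])
    simpa [Pi.div_def] using this
  have h2 : Tendsto (fun n => (q n / v n) / (1 - m * ρ * (q n / v n) * (ρ + v (n + 1))))
      atTop (𝓝 0) := by
    have := h1.div (((h1.const_mul (m * ρ)).mul (hw0.const_add ρ)).const_sub 1) (by simp)
    simpa [Pi.div_def] using this
  refine h2.congr fun n => ?_
  have h3 := hvpos n
  have h4 := hvpos (n + 1)
  have h5 : 1 - m * ρ * (q n / v n) * (ρ + v (n + 1)) = v (n + 1) / v n := by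
    have := hv n
    field_simp
    linarith
  rw [h5]
  field_simp

theorem critical_tendsto_div_succ_sq (hm : 0 < m) (hρ : 0 < ρ)
    (hvpos : ∀ n, 0 < v n) (hqpos : ∀ n, 0 < q n)
    (hv : ∀ n, v n = v (n + 1) + m * ρ * q n * (ρ + v (n + 1)))
    (hq : ∀ n, q (n + 1) = q n * (1 - m * v (n + 1)) / (1 + m * ρ * q n))
    (hv0 : Tendsto v atTop (𝓝 0)) (hq0 : Tendsto q atTop (𝓝 0)) :
    Tendsto (fun n => q n / v (n + 1) ^ 2) atTop (𝓝 (1 / (2 * ρ ^ 2))) := by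
  have hw0 := (tendsto_add_atTop_iff_nat 1).2 hv0
  have hqw := critical_tendsto_div_succ hm hρ hvpos hqpos hv hq hv0 hq0
  have hlt := critical_succ_lt hm hρ hvpos hqpos hv
  have h1 : Tendsto (fun n => q n / v n ^ 2) atTop (𝓝 (1 / (2 * ρ ^ 2))) := by
    refine tendsto_div_of_tendsto_sub_div_sub (g := fun n => v n ^ 2)
      (fun n => pow_lt_pow_left₀ (hlt n) (hvpos _).le two_ne_zero) hq0
      (by simpa using hv0.pow 2) ?_
    have h2 : Tendsto (fun n => (1 + ρ * (q n / v (n + 1))) /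
        ((1 + m * ρ * q n) * (ρ * (ρ + v (n + 1))) *
          (2 + m * ρ * (q n / v (n + 1)) * (ρ + v (n + 1))))) atTop
        (𝓝 ((1 + ρ * 0) / ((1 + m * ρ * 0) * (ρ * (ρ + 0)) * (2 + m * ρ * 0 * (ρ + 0))))) :=
      ((hqw.const_mul ρ).const_add 1).div
        ((((hq0.const_mul (m * ρ)).const_add 1).mul ((hw0.const_add ρ).const_mul ρ)).mul
          (((hqw.const_mul (m * ρ)).mul (hw0.const_add ρ)).const_add 2)) (by simp [hρ.ne'])
    convert h2 using 2 with n
    · have h3 := hvpos n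
      have h4 := hvpos (n + 1)
      have h5 := hqpos n
      have h6 : v n + v (n + 1) =
          v (n + 1) * (2 + m * ρ * (q n / v (n + 1)) * (ρ + v (n + 1))) := by
        rw [hv n]
        field_simp
        ring
      rw [show v n ^ 2 - v (n + 1) ^ 2 = (v n - v (n + 1)) * (v n + v (n + 1)) by ring,
        ← div_div, critical_sub_div_sub hm hρ hvpos hqpos hv hq, h6]
      field_simp
    · simp
      ring
  have h2 : Tendsto (fun n => q n / v n ^ 2 *
      (1 + m * ρ * (q n / v (n + 1)) * (ρ + v (n + 1))) ^ 2) atTop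
      (𝓝 (1 / (2 * ρ ^ 2) * (1 + m * ρ * 0 * (ρ + 0)) ^ 2)) :=
    h1.mul ((((hqw.const_mul (m * ρ)).mul (hw0.const_add ρ)).const_add 1).pow 2)
  convert h2 using 2 with n
  · have h3 := hvpos n
    have h4 := hvpos (n + 1)
    have h6 : 1 + m * ρ * (q n / v (n + 1)) * (ρ + v (n + 1)) = v n / v (n + 1) := by
      rw [hv n]
      field_simp
    rw [h6]
    field_simp
  · simp

/-- The ratio `v n / v (n + 1)` in terms of `q n / v (n + 1) ^ 2`. -/
theorem critical_ratio_eq (hvpos : ∀ n, 0 < v n)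
    (hv : ∀ n, v n = v (n + 1) + m * ρ * q n * (ρ + v (n + 1))) (n : ℕ) :
    v n / v (n + 1) =
      1 + m * ρ * (q n / v (n + 1) ^ 2) * v (n + 1) * (ρ + v (n + 1)) := by
  have h4 := hvpos (n + 1)
  rw [hv n]
  field_simp

theorem critical_tendsto_ratio (hm : 0 < m) (hρ : 0 < ρ)
    (hvpos : ∀ n, 0 < v n) (hqpos : ∀ n, 0 < q n)
    (hv : ∀ n, v n = v (n + 1) + m * ρ * q n * (ρ + v (n + 1)))
    (hq : ∀ n, q (n + 1) = q n * (1 - m * v (n + 1)) / (1 + m * ρ * q n))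
    (hv0 : Tendsto v atTop (𝓝 0)) (hq0 : Tendsto q atTop (𝓝 0)) :
    Tendsto (fun n => v n / v (n + 1)) atTop (𝓝 1) := by
  have hw0 := (tendsto_add_atTop_iff_nat 1).2 hv0
  have hQ := critical_tendsto_div_succ_sq hm hρ hvpos hqpos hv hq hv0 hq0
  simp only [critical_ratio_eq hvpos hv]
  simpa using (((hQ.const_mul (m * ρ)).mul hw0).mul (hw0.const_add ρ)).const_add 1

theorem critical_tendsto_cubic (hm : 0 < m) (hρ : 0 < ρ)
    (hvpos : ∀ n, 0 < v n) (hqpos : ∀ n, 0 < q n)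
    (hv : ∀ n, v n = v (n + 1) + m * ρ * q n * (ρ + v (n + 1)))
    (hq : ∀ n, q (n + 1) = q n * (1 - m * v (n + 1)) / (1 + m * ρ * q n))
    (hv0 : Tendsto v atTop (𝓝 0)) (hq0 : Tendsto q atTop (𝓝 0)) :
    Tendsto (fun n => (q n - 1 / (2 * ρ ^ 2) * v n ^ 2) / v n ^ 3) atTop
      (𝓝 (-(1 / (6 * ρ ^ 2) * (1 / ρ + m / 2)))) := by
  have hw0 := (tendsto_add_atTop_iff_nat 1).2 hv0
  have hlt := critical_succ_lt hm hρ hvpos hqpos hv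
  have hQ := critical_tendsto_div_succ_sq hm hρ hvpos hqpos hv hq hv0 hq0
  have hV := critical_tendsto_ratio hm hρ hvpos hqpos hv hq hv0 hq0
  refine tendsto_div_of_tendsto_sub_div_sub (g := fun n => v n ^ 3)
    (fun n => pow_lt_pow_left₀ (hlt n) (hvpos _).le three_ne_zero)
    (by simpa [-one_div] using hq0.sub ((hv0.pow 2).const_mul (1 / (2 * ρ ^ 2))))
    (by simpa using hv0.pow 3) ?_
  have h2 : Tendsto (fun n =>
      ((ρ ^ 2 * (q n / v (n + 1) ^ 2) - 1
          - m * ρ * (q n / v (n + 1) ^ 2) * v (n + 1) * (ρ + v (n + 1))) /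
        ((1 + m * ρ * q n) * (ρ * (ρ + v (n + 1))) * ρ)
        - m / (2 * ρ) * (q n / v (n + 1) ^ 2) * (ρ + v (n + 1))) /
      ((v n / v (n + 1)) ^ 2 + v n / v (n + 1) + 1)) atTop
      (𝓝 (((ρ ^ 2 * (1 / (2 * ρ ^ 2)) - 1
          - m * ρ * (1 / (2 * ρ ^ 2)) * 0 * (ρ + 0)) /
        ((1 + m * ρ * 0) * (ρ * (ρ + 0)) * ρ)
        - m / (2 * ρ) * (1 / (2 * ρ ^ 2)) * (ρ + 0)) / (1 ^ 2 + 1 + 1))) := by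
    have hr := hw0.const_add ρ
    refine Tendsto.div (Tendsto.sub (Tendsto.div ?_ ?_ (by simp [hρ.ne'])) ?_)
      (((hV.pow 2).add hV).add_const 1) (by norm_num)
    · exact ((hQ.const_mul _).sub_const 1).sub (((hQ.const_mul _).mul hw0).mul hr)
    · exact (((hq0.const_mul _).const_add 1).mul (hr.const_mul ρ)).mul_const ρ
    · exact (hQ.const_mul _).mul hr
  convert h2 using 2 with n
  · have h3 := hvpos n
    have h4 := hvpos (n + 1)
    have h5 := hqpos n
    have h7 : v n - v (n + 1) ≠ 0 := (sub_pos.2 (hlt n)).ne'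
    have h8 : 0 < ρ + v (n + 1) := by positivity
    have h9 : 0 < 1 + m * ρ * q n := by positivity
    have h10 : q n - q (n + 1) = (v n - v (n + 1)) * ((v (n + 1) + ρ * q n) /
        ((1 + m * ρ * q n) * (ρ * (ρ + v (n + 1))))) := by
      rw [← critical_sub_div_sub hm hρ hvpos hqpos hv hq n, mul_div_cancel₀ _ h7]
    have h11 : v n ^ 3 - v (n + 1) ^ 3 = (v n - v (n + 1)) *
        (v (n + 1) ^ 2 * ((v n / v (n + 1)) ^ 2 + v n / v (n + 1) + 1)) := by
      field_simp
      ring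
    have h12 : q n - 1 / (2 * ρ ^ 2) * v n ^ 2
          - (q (n + 1) - 1 / (2 * ρ ^ 2) * v (n + 1) ^ 2) =
        (v n - v (n + 1)) * ((v (n + 1) + ρ * q n) /
        ((1 + m * ρ * q n) * (ρ * (ρ + v (n + 1))))
          - 1 / (2 * ρ ^ 2) * (v n + v (n + 1))) := by
      linear_combination h10
    rw [h12, h11, mul_div_mul_left _ _ h7, ← div_div]
    congr 1
    rw [hv n]
    field_simp
    ring
  · field_simp
    ring

/-- Third-order expansion of the recursion for `v`. -/
theorem critical_tendsto_defect (hm : 0 < m) (hρ : 0 < ρ)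
    (hvpos : ∀ n, 0 < v n) (hqpos : ∀ n, 0 < q n)
    (hv : ∀ n, v n = v (n + 1) + m * ρ * q n * (ρ + v (n + 1)))
    (hq : ∀ n, q (n + 1) = q n * (1 - m * v (n + 1)) / (1 + m * ρ * q n))
    (hv0 : Tendsto v atTop (𝓝 0)) (hq0 : Tendsto q atTop (𝓝 0)) :
    Tendsto (fun n => (v n - v (n + 1) - m / 2 * (v n * v (n + 1))) / v (n + 1) ^ 3) atTop
      (𝓝 (m ^ 2 / 6 + m / (3 * ρ))) := by
  have hw0 := (tendsto_add_atTop_iff_nat 1).2 hv0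
  have hQ := critical_tendsto_div_succ_sq hm hρ hvpos hqpos hv hq hv0 hq0
  have hV := critical_tendsto_ratio hm hρ hvpos hqpos hv hq hv0 hq0
  have hB := critical_tendsto_cubic hm hρ hvpos hqpos hv hq hv0 hq0
  have hr := hw0.const_add ρ
  have h := (((hr.const_mul (m * ρ)).mul hB).mul (hV.pow 3)).add
    (((hV.pow 2).const_mul (m / (2 * ρ))).add
      (((hV.const_mul (m / 2)).mul (hQ.const_mul (m * ρ))).mul hr))
  convert h using 2 with n
  · have h3 := hvpos n
    have h4 := hvpos (n + 1)
    have h5 : m / 2 * (v n / v (n + 1)) * (m * ρ * (q n / v (n + 1) ^ 2)) * (ρ + v (n + 1)) =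
        m / 2 * v n * (v n - v (n + 1)) / v (n + 1) ^ 3 := by
      rw [show v n - v (n + 1) = m * ρ * q n * (ρ + v (n + 1)) by linarith [hv n]]
      field_simp
    rw [h5, show v n - v (n + 1) - m / 2 * (v n * v (n + 1)) =
      m * ρ * q n * (ρ + v (n + 1)) - m / 2 * (v n * v (n + 1)) by linarith [hv n]]
    field_simp
    ring
  · field_simp
    ring

theorem critical_tendsto_natCast_mul (hm : 0 < m) (hρ : 0 < ρ)
    (hvpos : ∀ n, 0 < v n) (hqpos : ∀ n, 0 < q n)
    (hv : ∀ n, v n = v (n + 1) + m * ρ * q n * (ρ + v (n + 1)))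
    (hq : ∀ n, q (n + 1) = q n * (1 - m * v (n + 1)) / (1 + m * ρ * q n))
    (hv0 : Tendsto v atTop (𝓝 0)) (hq0 : Tendsto q atTop (𝓝 0)) :
    Tendsto (fun n : ℕ => (n : ℝ) * v (n + 1)) atTop (𝓝 (2 / m)) := by
  have hw0 := (tendsto_add_atTop_iff_nat 1).2 hv0
  have hQ := critical_tendsto_div_succ_sq hm hρ hvpos hqpos hv hq hv0 hq0
  have hV := critical_tendsto_ratio hm hρ hvpos hqpos hv hq hv0 hq0
  have h1 : Tendsto (fun n => (v (n + 1))⁻¹ - (v n)⁻¹) atTop (𝓝 (m / 2)) := by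
    have h := ((hQ.const_mul (m * ρ)).mul (hw0.const_add ρ)).div hV one_ne_zero
    convert h using 2 with n
    · have h3 := hvpos n
      have h4 := hvpos (n + 1)
      simp only [Pi.div_apply]
      rw [inv_sub_inv h4.ne' h3.ne',
        show v n - v (n + 1) = m * ρ * q n * (ρ + v (n + 1)) by linarith [hv n]]
      field_simp
    · field_simp
      ring
  have h2 := ((tendsto_div_natCast_of_tendsto_sub (u := fun n => (v n)⁻¹) h1).inv₀
    (by positivity)).div hV one_ne_zero
  convert h2 using 2 with n
  · have h3 := hvpos n
    have h4 := hvpos (n + 1)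
    simp only [Pi.div_apply, inv_div, div_inv_eq_mul]
    field_simp
  · simp

end CriticalRecursion

/-- In the critical case (`r_n → 1 - 1/m`), setting
`v_n = r_n - (1 - 1/m)`, one has
`n³ (v_n - v_{n+1} - (m/2) v_n v_{n+1}) → 4(m+1)/(3 m (m-1))`. -/
theorem stmt18 (m : ℝ) (hm : 1 < m) (r p : ℕ → ℝ)
    (hmem : ∀ n, r n ∈ Set.Ioo (0 : ℝ) 1 ∧ p n ∈ Set.Ioo (0 : ℝ) 1)
    (hrec_r : ∀ n, r (n + 1) = r n / (m - (m - 1) * p n))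
    (hrec_p : ∀ n, p (n + 1) = 1 - (1 - r (n + 1)) * (1 - r (n + 1) * p n / r n))
    (hrlim : Tendsto r atTop (𝓝 (1 - 1 / m)))
    (v : ℕ → ℝ) (hv : ∀ n, v n = r n - (1 - 1 / m)) :
    Tendsto
      (fun n : ℕ => (n : ℝ) ^ 3 * (v n - v (n + 1) - m / 2 * (v n * v (n + 1))))
      atTop (𝓝 (4 * (m + 1) / (3 * m * (m - 1)))) := by
  have hm0 : 0 < m := one_pos.trans hm
  have hm1 : 0 < m - 1 := sub_pos.2 hm
  obtain ⟨ρ, hρ_def⟩ : ∃ ρ, ρ = 1 - 1 / m := ⟨_, rfl⟩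
  have hmρ : m * ρ = m - 1 := by rw [hρ_def]; field_simp
  have hρ : 0 < ρ := pos_of_mul_pos_right (hmρ ▸ hm1) hm0.le
  rw [← hρ_def] at hrlim
  simp only [← hρ_def] at hv
  have hrpos : ∀ n, 0 < r n := fun n => (hmem n).1.1
  have hqpos : ∀ n, 0 < 1 - p n := fun n => sub_pos.2 (hmem n).2.2
  have hden : ∀ n, m - (m - 1) * p n = 1 + m * ρ * (1 - p n) := fun n => by
    rw [hmρ]
    ring
  have hdenpos : ∀ n, 0 < 1 + m * ρ * (1 - p n) := fun n => by
    have := hqpos n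
    positivity
  have hr : ∀ n, r n = r (n + 1) * (1 + m * ρ * (1 - p n)) := fun n => by
    rw [hrec_r, hden, div_mul_cancel₀ _ (hdenpos n).ne']
  have hlt : ∀ n, r (n + 1) < r n := fun n => by
    have h1 := hqpos n
    have h2 := hrpos (n + 1)
    have : 0 < r (n + 1) * (m * ρ * (1 - p n)) := by positivity
    linarith [hr n]
  have hvpos : ∀ n, 0 < v n := fun n => by
    have := (antitone_nat_of_succ_le fun n => (hlt n).le).le_of_tendsto hrlim (n + 1)
    rw [hv]
    linarith [hlt n]
  have hvrec : ∀ n, v n = v (n + 1) + m * ρ * (1 - p n) * (ρ + v (n + 1)) := fun n => by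
    rw [hv, hv]
    linear_combination hr n
  have hqrec : ∀ n, 1 - p (n + 1) =
      (1 - p n) * (1 - m * v (n + 1)) / (1 + m * ρ * (1 - p n)) := fun n => by
    have h1 := hdenpos n
    have h2 := hrpos (n + 1)
    have h3 : r (n + 1) * p n / r n = p n / (1 + m * ρ * (1 - p n)) := by
      rw [hr n]
      field_simp
    have h4 : 1 - m * v (n + 1) = m * (1 - r (n + 1)) := by
      rw [hv]
      linear_combination hmρ
    have h5 : 1 - p n / (1 + m * ρ * (1 - p n)) =
        m * (1 - p n) / (1 + m * ρ * (1 - p n)) := by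
      field_simp
      linear_combination (1 - p n) * hmρ
    rw [hrec_p, h3, h4, h5]
    ring
  have hv0 : Tendsto v atTop (𝓝 0) := by
    simpa [← hv] using hrlim.sub_const ρ
  have hq0 : Tendsto (fun n => 1 - p n) atTop (𝓝 0) := by
    have h := ((hrlim.div ((tendsto_add_atTop_iff_nat 1).2 hrlim) hρ.ne').sub_const 1).div_const
      (m * ρ)
    rw [div_self hρ.ne', sub_self, zero_div] at h
    refine h.congr fun n => ?_
    have h2 := hrpos (n + 1)
    simp only [Pi.div_apply]
    rw [hr n]
    field_simp
    ring
  have hD := critical_tendsto_defect hm0 hρ hvpos hqpos hvrec hqrec hv0 hq0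
  have hN := critical_tendsto_natCast_mul hm0 hρ hvpos hqpos hvrec hqrec hv0 hq0
  convert (hN.pow 3).mul hD using 2 with n
  · have := hvpos (n + 1)
    field_simp
  · have : ρ = (m - 1) / m := by rw [← hmρ]; field_simp
    rw [this]
    field_simp
    ring
end
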